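/- In moment persuasion, if v : X → ℝ is Lipschitz continuous on X, then the persuasion problem with objective V(μ) = v(∫_Ω m dμ) is regular: the concave closure V̂ is superdifferentiable at μ₀, i.e. there exists an affine continuous V̄ : Δ(Ω) → ℝ with V̄(μ₀) = V̂(μ₀) and V̄(μ) ≥ V̂(μ) for all μ ∈ Δ(Ω). -/

import Mathlib

open MeasureTheory

/-- Convex combination `t μ + (1 - t) η` of two probability measures. -/
noncomputable def mix {Ω : Type*} [MeasurableSpace Ω] (t : NNReal) (ht : t ≤ 1)
    (μ η : ProbabilityMeasure Ω) : ProbabilityMeasure Ω :=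
  ⟨t • (μ : Measure Ω) + (1 - t) • (η : Measure Ω), by
    constructor
    simp only [Measure.coe_add, Pi.add_apply, Measure.smul_apply, smul_eq_mul,
      measure_univ, mul_one, ENNReal.smul_def]
    rw [← ENNReal.coe_add, add_tsub_cancel_of_le ht, ENNReal.coe_one]⟩

/-- A function `H : Δ(Ω) → ℝ` is affine if it respects convex combinations. -/
def IsAffine {Ω : Type*} [MeasurableSpace Ω] (H : ProbabilityMeasure Ω → ℝ) : Prop :=
  ∀ (μ η : ProbabilityMeasure Ω) (t : NNReal) (ht : t ≤ 1),
    H (mix t ht μ η) = (t : ℝ) * H μ + (1 - (t : ℝ)) * H η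

/-- The concave closure `V̂(μ) = inf {H(μ) : H affine continuous, H ≥ V}`. -/
noncomputable def concaveClosure {Ω : Type*} [MeasurableSpace Ω] [TopologicalSpace Ω]
    [OpensMeasurableSpace Ω] (V : ProbabilityMeasure Ω → ℝ) (μ : ProbabilityMeasure Ω) : ℝ :=
  sInf {r : ℝ | ∃ H : ProbabilityMeasure Ω → ℝ,
    Continuous H ∧ IsAffine H ∧ (∀ μ', V μ' ≤ H μ') ∧ r = H μ}

/-- The persuasion problem is regular if the concave closure `V̂` is superdifferentiable at
`μ₀`. -/
def RegularPersuasion {Ω : Type*} [MeasurableSpace Ω] [TopologicalSpace Ω]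
    [OpensMeasurableSpace Ω] (V : ProbabilityMeasure Ω → ℝ) (μ₀ : ProbabilityMeasure Ω) : Prop :=
  ∃ Vbar : ProbabilityMeasure Ω → ℝ, Continuous Vbar ∧ IsAffine Vbar ∧
    Vbar μ₀ = concaveClosure V μ₀ ∧ ∀ μ, concaveClosure V μ ≤ Vbar μ

section Aux

variable {Ω : Type*} [MetricSpace Ω] [CompactSpace Ω] [MeasurableSpace Ω] [BorelSpace Ω]

lemma aux_integrable {E : Type*} [NormedAddCommGroup E] [SecondCountableTopology E]
    {f : Ω → E} (hf : Continuous f) (μ : Measure Ω) [IsFiniteMeasure μ] :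
    Integrable f μ := by
  borelize E
  obtain ⟨C, hC⟩ := (isCompact_range hf).isBounded.exists_norm_le
  exact Integrable.of_bound hf.measurable.aestronglyMeasurable C
    (Filter.Eventually.of_forall fun x => hC _ ⟨x, rfl⟩)

lemma aux_integral_mix {E : Type*} [NormedAddCommGroup E] [NormedSpace ℝ E]
    [SecondCountableTopology E]
    {f : Ω → E} (hf : Continuous f) (t : NNReal) (ht : t ≤ 1) (μ η : ProbabilityMeasure Ω) :
    ∫ x, f x ∂(mix t ht μ η : Measure Ω)
      = (t : ℝ) • ∫ x, f x ∂(μ : Measure Ω) + (1 - (t : ℝ)) • ∫ x, f x ∂(η : Measure Ω) := by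
  have h1 : Integrable f (t • (μ : Measure Ω)) := aux_integrable hf _
  have h2 : Integrable f ((1 - t) • (η : Measure Ω)) := aux_integrable hf _
  have : (mix t ht μ η : Measure Ω) = t • (μ : Measure Ω) + (1 - t) • (η : Measure Ω) := rfl
  rw [this, integral_add_measure h1 h2, integral_smul_nnreal_measure,
    integral_smul_nnreal_measure, NNReal.smul_def, NNReal.smul_def, NNReal.coe_sub ht,
    NNReal.coe_one]

lemma aux_isAffine_integral {f : Ω → ℝ} (hf : Continuous f) :
    IsAffine (fun μ : ProbabilityMeasure Ω => ∫ x, f x ∂(μ : Measure Ω)) := by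
  intro μ η t ht
  simpa using aux_integral_mix hf t ht μ η

lemma aux_continuous_integral {f : Ω → ℝ} (hf : Continuous f) :
    Continuous (fun μ : ProbabilityMeasure Ω => ∫ x, f x ∂(μ : Measure Ω)) :=
  ProbabilityMeasure.continuous_integral_boundedContinuousFunction
    (BoundedContinuousFunction.mkOfCompact ⟨f, hf⟩)

lemma aux_finite {H : ProbabilityMeasure Ω → ℝ} (hH : Continuous H) (hA : IsAffine H)
    (s : Finset Ω) : ∀ μ : ProbabilityMeasure Ω, (μ : Measure Ω) ((s : Set Ω)ᶜ) = 0 →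
      H μ = ∫ x, H (diracProba x) ∂(μ : Measure Ω) := by
  classical
  have hc : Continuous fun x : Ω => H (diracProba x) := hH.comp continuous_diracProba
  induction s using Finset.induction_on with
  | empty =>
    intro μ h
    simp at h
  | insert a s ha ih =>
    intro μ h
    have hms : MeasurableSet ({a} : Set Ω) := measurableSet_singleton a
    by_cases h1 : (μ : Measure Ω) ({a}ᶜ) = 0
    · have : μ = diracProba a := by
        apply Subtype.ext
        have hp : (μ : Measure Ω) {a} = 1 := (prob_compl_eq_zero_iff hms).1 h1
        have h3 : (μ : Measure Ω).restrict {a} = μ := by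
          apply Measure.restrict_eq_self_of_ae_mem
          exact h1
        change (μ : Measure Ω) = Measure.dirac a
        rw [← h3, Measure.restrict_singleton, hp, one_smul]
      rw [this]
      simp [diracProba]
    · have hP : IsProbabilityMeasure (ProbabilityTheory.cond (μ : Measure Ω) ({a}ᶜ)) :=
        ProbabilityTheory.cond_isProbabilityMeasure h1
      let η : ProbabilityMeasure Ω := ⟨ProbabilityTheory.cond (μ : Measure Ω) ({a}ᶜ), hP⟩
      have ht : μ {a} ≤ 1 := ProbabilityMeasure.apply_le_one μ _
      have hη : (η : Measure Ω) ((s : Set Ω)ᶜ) = 0 := by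
        change ProbabilityTheory.cond (μ : Measure Ω) ({a}ᶜ) ((s : Set Ω)ᶜ) = 0
        rw [ProbabilityTheory.cond_apply hms.compl]
        have : ({a}ᶜ ∩ (s : Set Ω)ᶜ) = ((insert a s : Finset Ω) : Set Ω)ᶜ := by
          ext x; simp
        rw [this, h, mul_zero]
      have hmix : μ = mix (μ {a}) ht (diracProba a) η := by
        apply Subtype.ext
        change (μ : Measure Ω) = μ {a} • Measure.dirac a
          + (1 - μ {a}) • ProbabilityTheory.cond (μ : Measure Ω) ({a}ᶜ)
        have e : ((1 - μ {a} : NNReal) : ENNReal) = (μ : Measure Ω) ({a}ᶜ) := by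
          rw [prob_compl_eq_one_sub hms]
          simp
        have e1 : (1 - μ {a}) • ProbabilityTheory.cond (μ : Measure Ω) ({a}ᶜ)
            = (μ : Measure Ω).restrict {a}ᶜ := by
          change ((1 - μ {a} : NNReal) : ENNReal) • ProbabilityTheory.cond (μ : Measure Ω) ({a}ᶜ) = _
          rw [ProbabilityTheory.cond, e, smul_smul,
            ENNReal.mul_inv_cancel h1 (measure_ne_top _ _), one_smul]
        have e2 : μ {a} • Measure.dirac a = (μ : Measure Ω).restrict {a} := by
          change ((μ {a} : NNReal) : ENNReal) • Measure.dirac a = _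
          rw [Measure.restrict_singleton]
          simp
        rw [e1, e2, Measure.restrict_add_restrict_compl hms]
      rw [hmix, hA, ih η hη, aux_integral_mix hc]
      simp [diracProba]

lemma aux_repr {H : ProbabilityMeasure Ω → ℝ} (hH : Continuous H) (hA : IsAffine H)
    (μ : ProbabilityMeasure Ω) : H μ = ∫ x, H (diracProba x) ∂(μ : Measure Ω) := by
  classical
  have hc : Continuous fun x : Ω => H (diracProba x) := hH.comp continuous_diracProba
  obtain ⟨x0⟩ : Nonempty Ω := nonempty_of_isProbabilityMeasure (μ : Measure Ω)
  let f : ℕ → SimpleFunc Ω Ω := SimpleFunc.approxOn id measurable_id Set.univ x0 (Set.mem_univ _)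
  have hf : ∀ x, Filter.Tendsto (fun n => f n x) Filter.atTop (nhds x) := fun x =>
    SimpleFunc.tendsto_approxOn measurable_id (Set.mem_univ x0) (by simp)
  let ν : ℕ → ProbabilityMeasure Ω := fun n => μ.map (f n).measurable.aemeasurable
  have hν : Filter.Tendsto ν Filter.atTop (nhds μ) := by
    rw [ProbabilityMeasure.tendsto_iff_forall_integral_tendsto]
    intro g
    have : ∀ n, ∫ x, g x ∂(ν n : Measure Ω) = ∫ x, g (f n x) ∂(μ : Measure Ω) := fun n =>
      integral_map (f n).measurable.aemeasurable g.continuous.measurable.aestronglyMeasurable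
    simp_rw [this]
    refine tendsto_integral_of_dominated_convergence (fun _ => ‖g‖) ?_ (integrable_const _) ?_ ?_
    · intro n
      exact (g.continuous.measurable.comp (f n).measurable).aestronglyMeasurable
    · intro n
      exact Filter.Eventually.of_forall fun x => g.norm_coe_le_norm _
    · exact Filter.Eventually.of_forall fun x => (g.continuous.tendsto x).comp (hf x)
  have h1 := (hH.tendsto μ).comp hν
  have h2 := ((aux_continuous_integral hc).tendsto μ).comp hν
  refine tendsto_nhds_unique h1 (h2.congr fun n => ?_)
  refine (aux_finite hH hA (f n).range (ν n) ?_).symm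
  change (μ : Measure Ω).map (f n) _ = 0
  rw [Measure.map_apply (f n).measurable (Finset.measurableSet _).compl]
  convert measure_empty (μ := (μ : Measure Ω))
  ext x
  simp

end Aux

lemma aux_isCompact_convexHull {N : ℕ} {s : Set (EuclideanSpace ℝ (Fin N))} (hs : IsCompact s) :
    IsCompact (convexHull ℝ s) := by
  classical
  rcases s.eq_empty_or_nonempty with rfl | ⟨z0, hz0⟩
  · simp
  let F : (Fin (N + 1) → ℝ) × (Fin (N + 1) → EuclideanSpace ℝ (Fin N)) →
    EuclideanSpace ℝ (Fin N) := fun p => ∑ i, p.1 i • p.2 i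
  have hF : Continuous F := by
    refine continuous_finsetSum _ fun i _ => ?_
    fun_prop
  have hc : IsCompact (stdSimplex ℝ (Fin (N + 1)) ×ˢ
      Set.pi Set.univ (fun _ : Fin (N + 1) => s)) :=
    (isCompact_stdSimplex ℝ (Fin (N + 1))).prod (isCompact_univ_pi fun _ => hs)
  convert hc.image hF
  apply Set.Subset.antisymm
  · intro x hx
    obtain ⟨ι, _, z, w, hz, hai, hw, hw1, hx⟩ := eq_pos_convex_span_of_mem_convexHull hx
    have hcard : Fintype.card ι ≤ N + 1 := by
      have h1 := hai.card_le_finrank_succ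
      have h2 := Submodule.finrank_le (vectorSpan ℝ (Set.range z))
      rw [finrank_euclideanSpace_fin] at h2
      omega
    obtain ⟨e⟩ : Nonempty (ι ↪ Fin (N + 1)) :=
      Function.Embedding.nonempty_of_card_le (by simpa using hcard)
    let w' : Fin (N + 1) → ℝ := Function.extend e w 0
    let z' : Fin (N + 1) → EuclideanSpace ℝ (Fin N) := Function.extend e z (fun _ => z0)
    have hwe : ∀ i, w' (e i) = w i := fun i => e.injective.extend_apply _ _ _
    have hze : ∀ i, z' (e i) = z i := fun i => e.injective.extend_apply _ _ _
    have hw0 : ∀ j, j ∉ Set.range e → w' j = 0 := fun j hj =>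
      Function.extend_apply' _ _ _ (by simpa using hj)
    have hz0' : ∀ j, j ∉ Set.range e → z' j = z0 := fun j hj =>
      Function.extend_apply' _ _ _ (by simpa using hj)
    refine ⟨(w', z'), ⟨⟨?_, ?_⟩, ?_⟩, ?_⟩
    · intro j
      by_cases hj : j ∈ Set.range e
      · obtain ⟨i, rfl⟩ := hj
        exact (hw i).le.trans_eq (hwe i).symm
      · exact (hw0 j hj).symm.le
    · rw [← hw1]
      symm
      refine Finset.sum_of_injOn e e.injective.injOn (by simp) ?_ ?_
      · intro j _ hj
        exact hw0 j (by simpa using hj)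
      · intro i _
        exact (hwe i).symm
    · intro j _
      by_cases hj : j ∈ Set.range e
      · obtain ⟨i, rfl⟩ := hj
        simp only [hze]
        exact hz ⟨i, rfl⟩
      · simp only [hz0' j hj]
        exact hz0
    · rw [← hx]
      symm
      refine Finset.sum_of_injOn e e.injective.injOn (by simp) ?_ ?_
      · intro j _ hj
        simp [hw0 j (by simpa using hj)]
      · intro i _
        simp [hwe, hze]
  · rintro _ ⟨⟨w, z⟩, ⟨hw, hz⟩, rfl⟩
    exact (convex_convexHull ℝ s).sum_mem (fun i _ => hw.1 i) hw.2
      (fun i _ => subset_convexHull ℝ s (hz i (Set.mem_univ i)))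

section Main

variable {Ω : Type*} [MetricSpace Ω] [CompactSpace Ω] [MeasurableSpace Ω] [BorelSpace Ω]

/-- Every affine continuous majorant can be improved to a Lipschitz price function. -/
lemma aux_improve {N : ℕ} (m : Ω → EuclideanSpace ℝ (Fin N)) (hm : Continuous m)
    (v : EuclideanSpace ℝ (Fin N) → ℝ)
    (K : NNReal) (hlip : LipschitzOnWith K v (convexHull ℝ (Set.range m)))
    (μ₀ : ProbabilityMeasure Ω)
    (H : ProbabilityMeasure Ω → ℝ) (hH : Continuous H) (hA : IsAffine H)
    (hV : ∀ μ : ProbabilityMeasure Ω, v (∫ ω, m ω ∂(μ : Measure Ω)) ≤ H μ) :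
    ∃ p : Ω → ℝ, Continuous p ∧ (∀ x y, p x - p y ≤ K * dist (m x) (m y)) ∧
      (∀ μ : ProbabilityMeasure Ω, v (∫ ω, m ω ∂(μ : Measure Ω)) ≤ ∫ ω, p ω ∂(μ : Measure Ω)) ∧
      ∫ ω, p ω ∂(μ₀ : Measure Ω) ≤ H μ₀ := by
  have hXc : IsCompact (convexHull ℝ (Set.range m)) := aux_isCompact_convexHull (isCompact_range hm)
  have hXconv : Convex ℝ (convexHull ℝ (Set.range m)) := convex_convexHull ℝ _
  have hmX : ∀ ω, m ω ∈ convexHull ℝ (Set.range m) := fun ω => subset_convexHull ℝ _ ⟨ω, rfl⟩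
  generalize convexHull ℝ (Set.range m) = X at *
  let b : ProbabilityMeasure Ω → EuclideanSpace ℝ (Fin N) := fun μ => ∫ ω, m ω ∂(μ : Measure Ω)
  have hb : ∀ μ, b μ ∈ X := fun μ => hXconv.integral_mem hXc.isClosed
    (Filter.Eventually.of_forall hmX) (aux_integrable hm _)
  have : Nonempty (ProbabilityMeasure Ω) := ⟨μ₀⟩
  let P : EuclideanSpace ℝ (Fin N) → ℝ := fun x => ⨅ μ, (H μ + K * dist x (b μ))
  have hlow : ∀ x ∈ X, ∀ μ, v x ≤ H μ + K * dist x (b μ) := by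
    intro x hx μ
    have h1 := hlip.dist_le_mul x hx (b μ) (hb μ)
    have h2 := le_abs_self (v x - v (b μ))
    rw [Real.dist_eq] at h1
    have h3 : v (b μ) ≤ H μ := hV μ
    linarith
  have hbdd : ∀ x ∈ X, BddBelow (Set.range fun μ => H μ + K * dist x (b μ)) := by
    rintro x hx
    refine ⟨v x, ?_⟩
    rintro _ ⟨μ, rfl⟩
    exact hlow x hx μ
  have hPle : ∀ x ∈ X, ∀ μ, P x ≤ H μ + K * dist x (b μ) := fun x hx μ => ciInf_le (hbdd x hx) μ
  have hvP : ∀ x ∈ X, v x ≤ P x := fun x hx => le_ciInf (hlow x hx)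
  have hPlip : ∀ x ∈ X, ∀ y ∈ X, P x - P y ≤ K * dist x y := by
    intro x hx y hy
    have : P x - K * dist x y ≤ P y := by
      refine le_ciInf fun μ => ?_
      have h1 := hPle x hx μ
      have h2 : (K : ℝ) * dist x (b μ) ≤ K * (dist x y + dist y (b μ)) :=
        mul_le_mul_of_nonneg_left (dist_triangle _ _ _) K.2
      linarith
    linarith
  have hPL : LipschitzOnWith K P X := by
    refine LipschitzOnWith.of_le_add_mul K fun x hx y hy => ?_
    have := hPlip x hx y hy
    linarith
  have hPconv : ConvexOn ℝ X P := by
    refine ⟨hXconv, fun x hx y hy a c ha hc hac => ?_⟩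
    have key : ∀ μ η, P (a • x + c • y) ≤
        a * (H μ + K * dist x (b μ)) + c * (H η + K * dist y (b η)) := by
      intro μ η
      have ha1 : (⟨a, ha⟩ : NNReal) ≤ 1 := by
        change a ≤ 1
        linarith
      have hc' : c = 1 - a := by linarith
      have h1 := hPle _ (hXconv hx hy ha hc hac) (mix ⟨a, ha⟩ ha1 μ η)
      have h2 : b (mix ⟨a, ha⟩ ha1 μ η) = a • b μ + c • b η := by
        rw [hc']
        exact aux_integral_mix hm _ ha1 μ η
      have h3 : H (mix ⟨a, ha⟩ ha1 μ η) = a * H μ + c * H η := by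
        rw [hc']
        exact hA μ η _ ha1
      have h4 : dist (a • x + c • y) (a • b μ + c • b η) ≤ a * dist x (b μ) + c * dist y (b η) := by
        refine (dist_add_add_le _ _ _ _).trans ?_
        rw [dist_smul₀, dist_smul₀, Real.norm_of_nonneg ha, Real.norm_of_nonneg hc]
      rw [h2, h3] at h1
      have h5 := mul_le_mul_of_nonneg_left h4 K.2
      change (K : ℝ) * _ ≤ (K : ℝ) * _ at h5
      linarith
    refine le_of_forall_pos_le_add fun ε hε => ?_
    obtain ⟨μ, hμ⟩ := exists_lt_of_ciInf_lt (lt_add_of_pos_right (P x) hε)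
    obtain ⟨η, hη⟩ := exists_lt_of_ciInf_lt (lt_add_of_pos_right (P y) hε)
    have h1 := key μ η
    have h2 := mul_le_mul_of_nonneg_left hμ.le ha
    have h3 := mul_le_mul_of_nonneg_left hη.le hc
    have h4 : a * ε + c * ε = ε := by rw [← add_mul, hac, one_mul]
    simp only [smul_eq_mul]
    linarith
  have hpc : Continuous fun ω => P (m ω) := hPL.continuousOn.comp_continuous hm hmX
  refine ⟨fun ω => P (m ω), hpc, fun x y => hPlip _ (hmX x) _ (hmX y), fun μ => ?_, ?_⟩
  · refine (hvP _ (hb μ)).trans ?_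
    exact hPconv.map_integral_le hPL.continuousOn hXc.isClosed
      (Filter.Eventually.of_forall hmX) (aux_integrable hm _) (aux_integrable hpc _)
  · rw [aux_repr hH hA μ₀]
    refine integral_mono (aux_integrable hpc _)
      (aux_integrable (hH.comp continuous_diracProba) _) fun ω => ?_
    have h1 := hPle _ (hmX ω) (diracProba ω)
    have h2 : b (diracProba ω) = m ω := by
      simp [b, diracProba]
    rw [h2, dist_self, mul_zero, add_zero] at h1
    exact h1

end Main

/-- **Proposition 4**: in moment persuasion, if `v` is Lipschitz continuous on `X`, then the
persuasion problem with objective `V(μ) = v(∫ m dμ)` is regular. -/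
theorem moment_regular_of_lipschitz
    {Ω : Type*} [MetricSpace Ω] [CompactSpace Ω] [MeasurableSpace Ω] [BorelSpace Ω]
    (μ₀ : ProbabilityMeasure Ω)
    (hfull : ∀ U : Set Ω, IsOpen U → U.Nonempty → 0 < (μ₀ : Measure Ω) U)
    {N : ℕ} (m : Ω → EuclideanSpace ℝ (Fin N)) (hm : Continuous m)
    (v : EuclideanSpace ℝ (Fin N) → ℝ) (hv : UpperSemicontinuous v)
    (X : Set (EuclideanSpace ℝ (Fin N))) (hX : X = convexHull ℝ (Set.range m))
    (K : NNReal) (hlip : LipschitzOnWith K v X) :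
    RegularPersuasion (fun μ : ProbabilityMeasure Ω => v (∫ ω, m ω ∂(μ : Measure Ω))) μ₀ := by
  classical
  subst hX
  have hXc : IsCompact (convexHull ℝ (Set.range m)) := aux_isCompact_convexHull (isCompact_range hm)
  have hmX : ∀ ω, m ω ∈ convexHull ℝ (Set.range m) := fun ω => subset_convexHull ℝ _ ⟨ω, rfl⟩
  have hb : ∀ μ : ProbabilityMeasure Ω, ∫ ω, m ω ∂(μ : Measure Ω) ∈ convexHull ℝ (Set.range m) :=
    fun μ => (convex_convexHull ℝ _).integral_mem hXc.isClosed
      (Filter.Eventually.of_forall hmX) (aux_integrable hm _)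
  obtain ⟨B, hB⟩ := (hXc.image_of_continuousOn hlip.continuousOn).isBounded.exists_norm_le
  have hB' : ∀ x ∈ convexHull ℝ (Set.range m), |v x| ≤ B := fun x hx => hB _ ⟨x, hx, rfl⟩
  obtain ⟨D, hD⟩ := (Metric.isBounded_iff).1 (isCompact_range hm).isBounded
  have hD' : ∀ x y, dist (m x) (m y) ≤ D := fun x y => hD ⟨x, rfl⟩ ⟨y, rfl⟩
  let I : ProbabilityMeasure Ω → (BoundedContinuousFunction Ω ℝ) → ℝ :=
    fun μ p => ∫ ω, p ω ∂(μ : Measure Ω)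
  have hI : ∀ μ, Continuous (I μ) := by
    intro μ
    refine LipschitzWith.continuous (K := 1) (LipschitzWith.of_le_add fun p q => ?_)
    have h1 : I μ p ≤ ∫ ω, (q ω + dist p q) ∂(μ : Measure Ω) := by
      refine integral_mono (aux_integrable p.continuous _)
        (aux_integrable (q.continuous.add continuous_const) _) fun ω => ?_
      have h2 := BoundedContinuousFunction.dist_coe_le_dist (f := p) (g := q) ω
      rw [Real.dist_eq] at h2
      have h3 := le_abs_self (p ω - q ω)
      change p ω ≤ q ω + dist p q
      linarith
    rw [integral_add (aux_integrable q.continuous _) (integrable_const _)] at h1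
    simpa using h1
  let A : Set (BoundedContinuousFunction Ω ℝ) :=
    {p | (∀ x y, p x - p y ≤ K * dist (m x) (m y)) ∧
      (∀ μ : ProbabilityMeasure Ω, v (∫ ω, m ω ∂(μ : Measure Ω)) ≤ I μ p) ∧ I μ₀ p ≤ B}
  have hAclosed : IsClosed A := by
    have e : A = (⋂ x, ⋂ y, {p : BoundedContinuousFunction Ω ℝ |
        p x - p y ≤ K * dist (m x) (m y)}) ∩
        ((⋂ μ : ProbabilityMeasure Ω, {p | v (∫ ω, m ω ∂(μ : Measure Ω)) ≤ I μ p}) ∩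
          {p | I μ₀ p ≤ B}) := by
      ext p
      simp [A]
    rw [e]
    refine IsClosed.inter (isClosed_iInter fun x => isClosed_iInter fun y => ?_)
      (IsClosed.inter (isClosed_iInter fun μ => ?_) ?_)
    · exact isClosed_le ((BoundedContinuousFunction.lipschitz_eval_const x).continuous.sub
        (BoundedContinuousFunction.lipschitz_eval_const y).continuous) continuous_const
    · exact isClosed_le continuous_const (hI μ)
    · exact isClosed_le (hI μ₀) continuous_const
  have hAK : IsCompact A := by
    refine BoundedContinuousFunction.arzela_ascoli₂ (Set.Icc (-B) (B + K * D)) isCompact_Icc A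
      hAclosed ?_ ?_
    · rintro p x ⟨h1, h2, h3⟩
      constructor
      · have h4 := h2 (diracProba x)
        have h5 : I (diracProba x) p = p x := by simp [I, diracProba]
        have h6 : ∫ ω, m ω ∂(diracProba x : Measure Ω) = m x := by simp [diracProba]
        rw [h5, h6] at h4
        have h7 := (abs_le.1 (hB' _ (hmX x))).1
        linarith
      · have h4 : ∫ _ω, (p x - K * D) ∂(μ₀ : Measure Ω) ≤ I μ₀ p := by
          refine integral_mono (integrable_const _) (aux_integrable p.continuous _) fun ω => ?_
          have h5 := h1 x ω
          have h6 := mul_le_mul_of_nonneg_left (hD' x ω) K.2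
          change (K : ℝ) * _ ≤ (K : ℝ) * _ at h6
          change p x - K * D ≤ p ω
          linarith
        simp at h4
        linarith
    · intro x0
      refine Metric.equicontinuousAt_of_continuity_modulus
        (fun x => (K : ℝ) * dist (m x0) (m x)) ?_ _ ?_
      · have : Continuous fun x => (K : ℝ) * dist (m x0) (m x) := by fun_prop
        simpa using this.tendsto x0
      · refine Filter.Eventually.of_forall fun x p => ?_
        rw [Real.dist_eq, abs_le]
        have h1 := p.2.1 x0 x
        have h2 := p.2.1 x x0
        rw [dist_comm (m x) (m x0)] at h2
        constructor <;> linarith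
  have hAne : A.Nonempty := by
    refine ⟨BoundedContinuousFunction.const Ω B, ?_, ?_, ?_⟩
    · intro x y
      simp
      positivity
    · intro μ
      have h : I μ (BoundedContinuousFunction.const Ω B) = B := by simp [I]
      rw [h]
      exact (abs_le.1 (hB' _ (hb μ))).2
    · simp [I]
  obtain ⟨p, hpA, hpmin⟩ := hAK.exists_isMinOn hAne (hI μ₀).continuousOn
  have hVc := aux_continuous_integral (Ω := Ω) p.continuous
  have hVa := aux_isAffine_integral (Ω := Ω) p.continuous
  have hle : ∀ μ, concaveClosure
      (fun μ : ProbabilityMeasure Ω => v (∫ ω, m ω ∂(μ : Measure Ω))) μ ≤ I μ p := by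
    intro μ
    refine csInf_le ?_ ⟨_, hVc, hVa, hpA.2.1, rfl⟩
    refine ⟨v (∫ ω, m ω ∂(μ : Measure Ω)), ?_⟩
    rintro _ ⟨H, _, _, hH, rfl⟩
    exact hH μ
  refine ⟨fun μ => I μ p, hVc, hVa, le_antisymm ?_ (hle μ₀), hle⟩
  refine le_csInf ⟨_, _, hVc, hVa, hpA.2.1, rfl⟩ ?_
  rintro _ ⟨H, hHc, hHa, hH, rfl⟩
  obtain ⟨q, hqc, hq1, hq2, hq3⟩ := aux_improve m hm v K hlip μ₀ H hHc hHa hH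
  refine le_trans ?_ hq3
  by_cases hqB : ∫ ω, q ω ∂(μ₀ : Measure Ω) ≤ B
  · exact hpmin (a := BoundedContinuousFunction.mkOfCompact ⟨q, hqc⟩) ⟨hq1, hq2, hqB⟩
  · exact hpA.2.2.trans (not_le.1 hqB).le
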